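/- Pieri-type binomial formula: assume axiom (C0): there exists a regular dominant ρ' ∈ V₀ such that for every λ ∈ Λ₊ there is a unique p ∈ P^W of degree ℓ(λ) with p(ρ'+μ) = δ_{λμ} for all μ ∈ Λ₊ with ℓ(μ) ≤ ℓ(λ). Let ρ ∈ V₀ be regular dominant. Then for every λ ∈ Λ₊ and every k ∈ ℕ the following identity of polynomials in z holds: binom(ℓ(z) − ℓ(ρ+λ), k)·p_λ(z) = Σ_{τ ∈ Λ₊, ℓ(τ−λ) = k} p_λ(ρ+τ)·p_τ(z). -/

import Mathlib

/-
Common framework for F. Knop, "Construction of Commuting Difference Operators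
for Multiplicity Free Spaces".

We identify `Γ` with `ι → ℤ` via its basis `Σ` (so `Σ` is the standard basis),
`Γ^∨` with `ι → ℤ` via the dual basis `Σ^∨`, and `V = Hom(Γ, ℂ)` with `ι → ℂ`.
-/

open scoped BigOperators Classical
open MvPolynomial

noncomputable section

namespace Knop

variable {ι : Type*} [Fintype ι] [DecidableEq ι]

/-- The `i`-th element of the basis `Σ` of `Γ` (resp. of `Σ^∨ ⊆ Γ^∨`), in coordinates. -/
def e (i : ι) : ι → ℤ := Pi.single i 1

/-- The pairing between `Γ` and `Γ^∨` (in coordinates, the dot product);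
`pairZ γ η = γ(η) = η(γ)`. -/
def pairZ (γ η : ι → ℤ) : ℤ := ∑ i, γ i * η i

/-- Evaluation of `γ ∈ Γ` as a linear function on `V = Hom(Γ,ℂ) ≅ ι → ℂ`. -/
def evalC (γ : ι → ℤ) (z : ι → ℂ) : ℂ := ∑ i, (γ i : ℂ) * z i

/-- The embedding `Γ^∨ ⊆ V`. -/
def toV (η : ι → ℤ) : ι → ℂ := fun i => (η i : ℂ)

/-- The action of `w ∈ Aut(Γ)` on `V = Hom(Γ, ℂ)`: `(w • z)(γ) = z(w⁻¹ γ)`, in coordinates. -/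
def actV (w : (ι → ℤ) ≃ₗ[ℤ] (ι → ℤ)) (z : ι → ℂ) : ι → ℂ :=
  fun i => evalC (w.symm (e i)) z

/-- The action of `w ∈ Aut(Γ)` on `Γ^∨ = Hom(Γ, ℤ)`: `(w • η)(γ) = η(w⁻¹ γ)`. -/
def actDual (w : (ι → ℤ) ≃ₗ[ℤ] (ι → ℤ)) (η : ι → ℤ) : ι → ℤ :=
  fun i => pairZ (w.symm (e i)) η

/-- `Λ₊`, the `ℕ`-span of `Σ^∨` inside `Γ^∨`. -/
def LamPlus : Set (ι → ℤ) := {η | ∀ i, 0 ≤ η i}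

/-- The reflection `s_α(x) = x - α^∨(x)·α` attached to a root `α` with coroot `αv`. -/
def reflMap (α αv : ι → ℤ) : (ι → ℤ) → (ι → ℤ) := fun x => x - pairZ x αv • α

/-- The data `(Γ, Σ, W, ℓ)` together with the axioms C1–C8 of Knop's paper
(in the coordinates given by `Σ`).  The root system `Δ` of `W`, the set
`Φ = W·Σ`, and `Λ₁ = W·Σ^∨₁` are carried along as `Finset`s with their
defining specifications. -/
structure Data (ι : Type*) [Fintype ι] [DecidableEq ι] where
  /-- the reflection group `W ⊆ Aut(Γ)` -/
  W : Subgroup ((ι → ℤ) ≃ₗ[ℤ] (ι → ℤ))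
  /-- `W` is finite -/
  W_finite : (W : Set ((ι → ℤ) ≃ₗ[ℤ] (ι → ℤ))).Finite
  /-- the element `ℓ ∈ Γ` -/
  ell : ι → ℤ
  /-- the set of roots `Δ ⊆ Γ` of `W` -/
  Δ : Finset (ι → ℤ)
  /-- the coroot `α^∨ ∈ Γ^∨` of a root `α` -/
  coroot : (ι → ℤ) → (ι → ℤ)
  /-- `Φ = W·Σ` -/
  Φ : Finset (ι → ℤ)
  /-- `Λ₁ = W·Σ^∨₁` -/
  Λ₁ : Finset (ι → ℤ)
  Φ_spec : ∀ ω, ω ∈ Φ ↔ ∃ w ∈ W, ∃ i, ω = w (e i)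
  Λ₁_spec : ∀ η, η ∈ Λ₁ ↔ ∃ w ∈ W, ∃ i, ell i = 1 ∧ η = actDual w (e i)
  /-- `Δ = -Δ` -/
  Δ_neg : ∀ α ∈ Δ, -α ∈ Δ
  /-- every root is a primitive vector of `Γ` -/
  Δ_prim : ∀ α ∈ Δ, ∀ (n : ℤ) (β : ι → ℤ), α = n • β → IsUnit n
  /-- the reflection `s_α` belongs to `W` -/
  refl_mem : ∀ α ∈ Δ, ∃ w ∈ W, ∀ x, w x = reflMap α (coroot α) x
  /-- `α^∨(α) = 2` -/
  coroot_pair : ∀ α ∈ Δ, pairZ α (coroot α) = 2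
  /-- C1: `W` is generated by the reflections `s_α`, `α ∈ Δ` -/
  C1 : W ≤ Subgroup.closure {w : (ι → ℤ) ≃ₗ[ℤ] (ι → ℤ) |
        ∃ α ∈ Δ, ∀ x, w x = reflMap α (coroot α) x}
  /-- C2: `Δ = Δ⁺ ∪ (-Δ⁺)` -/
  C2 : ∀ α ∈ Δ, (∀ i, 0 ≤ α i) ∨ (∀ i, α i ≤ 0)
  /-- C3: `Φ ⊆ Φ⁺ ∪ (-Φ⁺)` -/
  C3 : ∀ ω ∈ Φ, (∀ i, 0 ≤ ω i) ∨ (∀ i, ω i ≤ 0)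
  /-- C4: `ℓ ∈ Γ^W` -/
  C4 : ∀ w ∈ W, w ell = ell
  /-- C5: `Σ_{ω ∈ Φ⁺} ω - Σ_{α ∈ Δ⁺} α = ℓ` -/
  C5 : (∑ ω ∈ Φ.filter (fun ω => ∀ i, 0 ≤ ω i), ω)
        - (∑ α ∈ Δ.filter (fun α => ∀ i, 0 ≤ α i), α) = ell
  /-- C6: `ℓ(η) > 0` for all `η ∈ Σ^∨` -/
  C6 : ∀ i, 0 < ell i
  /-- C7: `ω(η) ∈ {-1,0,1}` for `η ∈ Σ^∨₁` and `ω ∈ Δ ∪ Φ` -/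
  C7 : ∀ i, ell i = 1 → ∀ ω, (ω ∈ Δ ∨ ω ∈ Φ) → ω i = -1 ∨ ω i = 0 ∨ ω i = 1
  /-- C8: a `W`-invariant linear function on `V` is determined by its restriction to `Σ^∨₁` -/
  C8 : ∀ c c' : ι → ℂ,
    (∀ w ∈ W, ∀ z : ι → ℂ, ∑ i, c i * actV w z i = ∑ i, c i * z i) →
    (∀ w ∈ W, ∀ z : ι → ℂ, ∑ i, c' i * actV w z i = ∑ i, c' i * z i) →
    (∀ i, ell i = 1 → c i = c' i) → c = c'

namespace Data

variable (D : Data ι)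

/-- `Δ⁺`, the positive roots. -/
def Δpos : Finset (ι → ℤ) := D.Δ.filter fun α => ∀ i, 0 ≤ α i

/-- `Φ⁺`. -/
def Φpos : Finset (ι → ℤ) := D.Φ.filter fun ω => ∀ i, 0 ≤ ω i

/-- The submonoid `Λ` of `Γ^∨` generated by `Λ₁`. -/
def Lam : AddSubmonoid (ι → ℤ) := AddSubmonoid.closure (D.Λ₁ : Set (ι → ℤ))

/-- `ρ ∈ V₀`: `ω₁(ρ) = ω₂(ρ)` whenever `ω₁, ω₂ ∈ Σ` lie in the same `±W`-orbit. -/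
def InV0 (ρ : ι → ℂ) : Prop :=
  ∀ i j : ι, (∃ w ∈ D.W, e i = w (e j) ∨ e i = -(w (e j))) → ρ i = ρ j

/-- `k` is the multiplicity-parameter function of `ρ ∈ V₀`:
`k_ω = ω₁(ρ)` for any `ω₁ ∈ (±W)·ω ∩ Σ`. -/
def IsK (ρ : ι → ℂ) (k : (ι → ℤ) → ℂ) : Prop :=
  ∀ (ω : ι → ℤ) (i : ι), (∃ w ∈ D.W, e i = w ω ∨ e i = -(w ω)) → k ω = ρ i

/-- `ρ` is dominant: `α(ρ) ∉ {-1,-2,…}` for all `α ∈ Δ⁺`. -/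
def Dominant (ρ : ι → ℂ) : Prop :=
  ∀ α ∈ D.Δpos, ∀ n : ℕ, evalC α ρ ≠ -((n : ℂ) + 1)

/-- `ρ` is regular: `α(ρ) ≠ 0` for all `α ∈ Δ⁺`. -/
def Regular (ρ : ι → ℂ) : Prop :=
  ∀ α ∈ D.Δpos, evalC α ρ ≠ 0

/-- `ρ` is non-integral: `α(ρ) ∉ ℤ` for all `α ∈ Δ`. -/
def NonIntegral (ρ : ι → ℂ) : Prop :=
  ∀ α ∈ D.Δ, ∀ n : ℤ, evalC α ρ ≠ (n : ℂ)

/-- `ρ` is strongly dominant (`k` being the parameter function of `ρ`). -/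
def StronglyDominant (ρ : ι → ℂ) (k : (ι → ℤ) → ℂ) : Prop :=
  D.Regular ρ ∧ D.Dominant ρ ∧
    ∀ ω ∈ D.Φpos, (∀ n : ℕ, evalC ω ρ - k ω ≠ -((n : ℂ) + 1)) ∧
      (∀ n : ℕ, evalC ω ρ + k ω ≠ -(n : ℂ))

/-- The rational function `f_η`, `η ∈ Λ₁`. -/
def f (k : (ι → ℤ) → ℂ) (η : ι → ℤ) (z : ι → ℂ) : ℂ :=
  (∏ ω ∈ D.Φ.filter (fun ω => 0 < pairZ ω η), (evalC ω z - k ω)) /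
  (∏ α ∈ D.Δ.filter (fun α => 0 < pairZ α η), evalC α z)

/-- The value at `z` of `L(p) = Σ_{η ∈ Λ₁} f_η T_η (p)`. -/
def Lval (k : (ι → ℤ) → ℂ) (p : MvPolynomial ι ℂ) (z : ι → ℂ) : ℂ :=
  ∑ η ∈ D.Λ₁, D.f k η z * eval (z - toV η) p

/-- `W`-invariance of a polynomial function on `V`. -/
def WInv (p : MvPolynomial ι ℂ) : Prop :=
  ∀ w ∈ D.W, ∀ z : ι → ℂ, eval (actV w z) p = eval z p

/-- The defining property of the Capelli polynomial `p_λ` (with shift `ρ`):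
`p` is `W`-invariant of degree `≤ ℓ(λ)` and `p(ρ+μ) = δ_{λμ}` for all
`μ ∈ Λ₊` with `ℓ(μ) ≤ ℓ(λ)`. -/
def CapelliAt (ρ : ι → ℂ) (lam : ι → ℤ) (p : MvPolynomial ι ℂ) : Prop :=
  D.WInv p ∧ (p.totalDegree : ℤ) ≤ pairZ D.ell lam ∧
    ∀ μ : ι → ℤ, μ ∈ LamPlus → pairZ D.ell μ ≤ pairZ D.ell lam →
      eval (ρ + toV μ) p = if μ = lam then 1 else 0

/-- Axiom C0: for some regular dominant `ρ' ∈ V₀` and every `λ ∈ Λ₊` there is a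
unique `W`-invariant polynomial of degree `ℓ(λ)` with `p(ρ'+μ) = δ_{λμ}` for all
`μ ∈ Λ₊` with `ℓ(μ) ≤ ℓ(λ)`. -/
def C0 : Prop :=
  ∃ ρ' : ι → ℂ, D.InV0 ρ' ∧ D.Regular ρ' ∧ D.Dominant ρ' ∧
    ∀ lam : ι → ℤ, lam ∈ LamPlus →
      ∃! p : MvPolynomial ι ℂ, D.WInv p ∧
        p.totalDegree = (pairZ D.ell lam).toNat ∧
        ∀ μ : ι → ℤ, μ ∈ LamPlus → pairZ D.ell μ ≤ pairZ D.ell lam →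
          eval (ρ' + toV μ) p = if μ = lam then 1 else 0

end Data

/-- The `m`-th point `τ_m` of the path starting at `lam` with step sequence `s`
(steps are meant to lie in `Λ₁`). -/
def pathPt (lam : ι → ℤ) {d : ℕ} (s : Fin d → ι → ℤ) (m : ℕ) : ι → ℤ :=
  lam + ∑ i ∈ Finset.univ.filter (fun i : Fin d => (i : ℕ) < m), s i

/-- All paths of length `d` from `lam` to `mu` (with steps in `Λ₁`), encoded by
their step sequences. -/
def paths (D : Data ι) (lam mu : ι → ℤ) (d : ℕ) : Finset (Fin d → ι → ℤ) :=
  (Fintype.piFinset fun _ : Fin d => D.Λ₁).filter fun s => pathPt lam s d = mu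

/-- All positive paths of length `d` from `lam` to `mu`. -/
def posPaths (D : Data ι) (lam mu : ι → ℤ) (d : ℕ) : Finset (Fin d → ι → ℤ) :=
  (Fintype.piFinset fun _ : Fin d => D.Λ₁).filter fun s =>
    (∀ m ≤ d, pathPt lam s m ∈ LamPlus) ∧ pathPt lam s d = mu

/-- The falling factorial `[x ↓ d] = x(x-1)⋯(x-d+1)`. -/
def ffall (x : ℂ) (d : ℤ) : ℂ := ∏ j ∈ Finset.range d.toNat, (x - (j : ℂ))

namespace Data

variable (D : Data ι)

/-- The generalized rational function `f_τ`, `τ ∈ Λ` (formula (Def-f-l)). -/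
def fgen (k : (ι → ℤ) → ℂ) (τ : ι → ℤ) (z : ι → ℂ) : ℂ :=
  (∏ ω ∈ D.Φ.filter (fun ω => 0 < pairZ ω τ), ffall (evalC ω z - k ω) (pairZ ω τ)) /
  (∏ α ∈ D.Δ.filter (fun α => 0 < pairZ α τ), ffall (evalC α z) (pairZ α τ))

/-- The virtual dimension `d_λ = (-1)^{ℓ(λ)} f_λ(-ρ) / f_λ(ρ+λ)`. -/
def vdim (k : (ι → ℤ) → ℂ) (ρ : ι → ℂ) (lam : ι → ℤ) : ℂ :=
  (-1 : ℂ) ^ (pairZ D.ell lam) * D.fgen k lam (-ρ) / D.fgen k lam (ρ + toV lam)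

/-- The rational function `b_τ^h` (formula (Def-b-t)); here the sum runs over
all paths from `0` to `τ` of length `d = ℓ(τ)`. -/
def bfun (k : (ι → ℤ) → ℂ) (h : MvPolynomial ι ℂ) (τ : ι → ℤ) (z : ι → ℂ) : ℂ :=
  ∑ s ∈ paths D 0 τ (pairZ D.ell τ).toNat,
    (∑ i ∈ Finset.range ((pairZ D.ell τ).toNat + 1),
      ((-1 : ℂ) ^ ((pairZ D.ell τ).toNat - i) /
        ((Nat.factorial i : ℂ) * (Nat.factorial ((pairZ D.ell τ).toNat - i) : ℂ))) *
        eval (z - toV (pathPt 0 s i)) h) *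
    ∏ i : Fin (pairZ D.ell τ).toNat, D.fgen k (s i) (z - toV (pathPt 0 s (i : ℕ)))

/-- The difference operator `D_h = Σ_{τ ∈ Λ} b_τ^h T_τ`, acting on functions on `V`. -/
def Dop (k : (ι → ℤ) → ℂ) (h : MvPolynomial ι ℂ) (F : (ι → ℂ) → ℂ) (z : ι → ℂ) : ℂ :=
  ∑ᶠ τ ∈ (D.Lam : Set (ι → ℤ)), D.bfun k h τ z * F (z - toV τ)

/-- The order relation on `Λ`: `τ₁ ≤ τ₂` iff `ℓ(τ₁) < ℓ(τ₂)`, or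
`ℓ(τ₁) = ℓ(τ₂)` and `τ₂ - τ₁` is a sum of positive coroots. -/
def ordLe (τ₁ τ₂ : ι → ℤ) : Prop :=
  pairZ D.ell τ₁ < pairZ D.ell τ₂ ∨
    (pairZ D.ell τ₁ = pairZ D.ell τ₂ ∧
      τ₂ - τ₁ ∈ AddSubmonoid.closure (D.coroot '' (D.Δpos : Set (ι → ℤ))))

end Data


/-!
For fixed `d`, evaluation at the points `ρ + μ` with `μ ∈ Λ₊`, `ℓ(μ) ≤ d`, is a linear map from the
`W`-invariant polynomials of degree at most `d` to a space which does not depend on `ρ`. It is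
injective for the shift of axiom `C0`, and it is surjective, being unitriangular with respect to
`ℓ`, for every shift with a full family of Capelli polynomials; counting dimensions, it is bijective
for the latter. So an invariant `q` of degree at most `d` vanishing at all nodes with `ℓ(μ) < d` is
`∑ q(ρ+τ) p_τ` over `ℓ(τ) = d`. The formula is the case `q(z) = binom(ℓ(z) - ℓ(ρ+λ), m) p_λ(z)`,
`d = ℓ(λ) + m`: at a node `ρ + μ` either `p_λ` vanishes or the binomial coefficient is
`binom(j, m)` with `j = ℓ(μ) - ℓ(λ) ≥ 0`, which is `0` for `j < m` and `1` for `j = m`.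
-/

section General

lemma det_eq_one_of_unitriangular {R S α : Type*} [CommRing R] [Fintype S] [DecidableEq S]
    [LinearOrder α] (h : S → α) (A : Matrix S S R)
    (hA : ∀ μ ν, h ν ≤ h μ → A μ ν = if ν = μ then 1 else 0) : A.det = 1 := by
  have htri : A.BlockTriangular h := fun μ ν hlt => by
    rw [hA μ ν hlt.le, if_neg (by rintro rfl; exact lt_irrefl _ hlt)]
  have hblock (a : α) : A.toSquareBlock h a = 1 := by
    ext μ ν
    rw [Matrix.toSquareBlock_def, Matrix.of_apply, hA _ _ (ν.2.trans μ.2.symm).le,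
      Matrix.one_apply]
    simp only [Subtype.ext_iff, eq_comm]
  rw [htri.det]
  exact Finset.prod_eq_one fun a _ => by rw [hblock, Matrix.det_one]

lemma surjective_of_unitriangular {R M S α : Type*} [CommRing R] [AddCommGroup M] [Module R M]
    [Finite S] [DecidableEq S] [LinearOrder α] (h : S → α) (f : M →ₗ[R] S → R) (p : S → M)
    (hp : ∀ μ ν, h ν ≤ h μ → f (p μ) ν = if ν = μ then 1 else 0) : Function.Surjective f := by
  have := Fintype.ofFinite S
  intro v
  let A : Matrix S S R := Matrix.of fun μ ν => f (p μ) ν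
  have hdet : IsUnit A.det := by
    rw [det_eq_one_of_unitriangular h A hp]
    exact isUnit_one
  refine ⟨∑ μ, (Matrix.vecMul v A⁻¹) μ • p μ, ?_⟩
  calc f (∑ μ, (Matrix.vecMul v A⁻¹) μ • p μ)
      = Matrix.vecMul (Matrix.vecMul v A⁻¹) A := by
        ext ν
        simp [A, Matrix.vecMul, dotProduct]
    _ = v := by rw [Matrix.vecMul_vecMul, Matrix.nonsing_inv_mul A hdet, Matrix.vecMul_one]

lemma totalDegree_aeval_le {R σ : Type*} [CommSemiring R] (f : Polynomial R)
    (q : MvPolynomial σ R) :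
    (Polynomial.aeval q f).totalDegree ≤ f.natDegree * q.totalDegree := by
  rw [Polynomial.aeval_eq_sum_range]
  refine totalDegree_finsetSum_le fun i hi => ?_
  calc (f.coeff i • q ^ i).totalDegree ≤ (q ^ i).totalDegree := totalDegree_smul_le _ _
    _ ≤ i * q.totalDegree := totalDegree_pow q i
    _ ≤ f.natDegree * q.totalDegree :=
      Nat.mul_le_mul_right _ (Nat.lt_succ_iff.1 (Finset.mem_range.1 hi))

lemma totalDegree_add_eq_or_totalDegree_sub_eq {R σ : Type*} [CommRing R] [IsAddTorsionFree R]
    {p q : MvPolynomial σ R} (hqp : q.totalDegree ≤ p.totalDegree) :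
    (p + q).totalDegree = p.totalDegree ∨ (p - q).totalDegree = p.totalDegree := by
  by_contra! hne
  have hadd : (p + q).totalDegree < p.totalDegree :=
    lt_of_le_of_ne ((totalDegree_add p q).trans (max_le le_rfl hqp)) hne.1
  have hsub : (p - q).totalDegree < p.totalDegree :=
    lt_of_le_of_ne ((totalDegree_sub p q).trans (max_le le_rfl hqp)) hne.2
  have htwo : (2 • p).totalDegree = p.totalDegree := by
    rw [totalDegree, totalDegree, support_smul_eq two_ne_zero]
  have hsum : 2 • p = (p + q) + (p - q) := by rw [two_nsmul]; abel
  have hle := totalDegree_add (p + q) (p - q)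
  rw [← hsum, htwo] at hle
  exact hle.not_gt (max_lt hadd hsub)

end General

section Pairing

omit [DecidableEq ι] in
lemma pairZ_sub (γ η η' : ι → ℤ) : pairZ γ (η - η') = pairZ γ η - pairZ γ η' :=
  dotProduct_sub γ η η'

omit [DecidableEq ι] in
lemma evalC_add (γ : ι → ℤ) (z z' : ι → ℂ) : evalC γ (z + z') = evalC γ z + evalC γ z' :=
  dotProduct_add (fun i => (γ i : ℂ)) z z'

omit [DecidableEq ι] in
lemma evalC_toV (γ η : ι → ℤ) : evalC γ (toV η) = (pairZ γ η : ℂ) := by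
  simp only [evalC, toV, pairZ, Int.cast_sum, Int.cast_mul]

lemma evalC_actV (γ : ι → ℤ) (w : (ι → ℤ) ≃ₗ[ℤ] (ι → ℤ)) (z : ι → ℂ) :
    evalC γ (actV w z) = evalC (w.symm γ) z := by
  have hγ : w.symm γ = ∑ i, γ i • w.symm (e i) := by
    conv_lhs => rw [pi_eq_sum_univ' γ, map_sum]
    simp only [map_smul, e]
  simp only [hγ, evalC, actV, Finset.sum_apply, Pi.smul_apply, smul_eq_mul, Int.cast_sum,
    Int.cast_mul, Finset.mul_sum, Finset.sum_mul, mul_assoc]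
  exact Finset.sum_comm

/-- The linear function on `V` given by `γ ∈ Γ`, as a polynomial. -/
def linearForm (γ : ι → ℤ) : MvPolynomial ι ℂ := ∑ i, C (γ i : ℂ) * X i

omit [DecidableEq ι] in
@[simp]
lemma eval_linearForm (γ : ι → ℤ) (z : ι → ℂ) : eval z (linearForm γ) = evalC γ z := by
  simp [linearForm, evalC]

omit [DecidableEq ι] in
lemma totalDegree_linearForm_le (γ : ι → ℤ) : (linearForm γ).totalDegree ≤ 1 :=
  totalDegree_finsetSum_le fun i _ =>
    (totalDegree_mul _ _).trans (by rw [totalDegree_C, totalDegree_X])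

end Pairing

namespace Data

variable (D : Data ι)

lemma evalC_ell_actV {w : (ι → ℤ) ≃ₗ[ℤ] (ι → ℤ)} (hw : w ∈ D.W) (z : ι → ℂ) :
    evalC D.ell (actV w z) = evalC D.ell z := by
  rw [evalC_actV, (LinearEquiv.symm_apply_eq w).2 (D.C4 w hw).symm]

lemma pairZ_ell_nonneg {μ : ι → ℤ} (hμ : μ ∈ LamPlus) : 0 ≤ pairZ D.ell μ :=
  Finset.sum_nonneg fun i _ => mul_nonneg (D.C6 i).le (hμ i)

-- Otherwise `ℓ` and `0` would be invariant linear functions with the same restriction to `Σ^∨₁`.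
lemma exists_ell_eq_one [Nonempty ι] : ∃ i, D.ell i = 1 := by
  by_contra! hne
  have hzero := D.C8 (fun i => (D.ell i : ℂ)) 0 (fun w hw z => D.evalC_ell_actV hw z)
    (by simp) (fun i hi => absurd hi (hne i))
  obtain ⟨i⟩ := ‹Nonempty ι›
  exact (D.C6 i).ne' (Int.cast_eq_zero.1 (congrFun hzero i))

lemma exists_mem_LamPlus_pairZ_ell_eq [Nonempty ι] (d : ℕ) :
    ∃ lam ∈ LamPlus, pairZ D.ell lam = d := by
  obtain ⟨i, hi⟩ := D.exists_ell_eq_one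
  have hnonneg : 0 ≤ (Pi.single i (d : ℤ) : ι → ℤ) := Pi.single_nonneg.2 (Int.natCast_nonneg d)
  refine ⟨Pi.single i (d : ℤ), hnonneg, ?_⟩
  simp [pairZ, Pi.single_apply, hi]

/-- The set of interpolation nodes `μ ∈ Λ₊` with `ℓ(μ) ≤ d`. -/
def LamPlusLE (d : ℤ) : Set (ι → ℤ) := {μ | μ ∈ LamPlus ∧ pairZ D.ell μ ≤ d}

lemma finite_LamPlusLE (d : ℤ) : (D.LamPlusLE d).Finite := by
  refine (Set.finite_Icc (0 : ι → ℤ) (fun _ => d)).subset ?_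
  rintro μ ⟨hμ, hμd⟩
  refine ⟨hμ, fun i => ?_⟩
  calc μ i ≤ D.ell i * μ i := le_mul_of_one_le_left (hμ i) (D.C6 i)
    _ ≤ pairZ D.ell μ := Finset.single_le_sum (f := fun i => D.ell i * μ i)
      (fun j _ => mul_nonneg (D.C6 j).le (hμ j)) (Finset.mem_univ i)
    _ ≤ d := hμd

/-- The nodes `τ ∈ Λ₊` with `ℓ(τ) = d`. -/
def LamPlusEq (d : ℤ) : Set (ι → ℤ) := {τ | τ ∈ LamPlus ∧ pairZ D.ell τ = d}

lemma finite_LamPlusEq (d : ℤ) : (D.LamPlusEq d).Finite :=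
  (D.finite_LamPlusLE d).subset fun _ hτ => ⟨hτ.1, hτ.2.le⟩

/-- The algebra `P^W` of `W`-invariant polynomials on `V`. -/
def invariants : Subalgebra ℂ (MvPolynomial ι ℂ) where
  carrier := {p | D.WInv p}
  mul_mem' hp hq w hw z := by rw [map_mul, map_mul, hp w hw, hq w hw]
  add_mem' hp hq w hw z := by rw [map_add, map_add, hp w hw, hq w hw]
  algebraMap_mem' c w _ z := by simp [algebraMap_eq]

lemma linearForm_ell_mem_invariants : linearForm D.ell ∈ D.invariants := fun w hw z => by
  rw [eval_linearForm, eval_linearForm, D.evalC_ell_actV hw]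

/-- The `W`-invariant polynomial `binom(ℓ(z) - c, m)` in `z`. -/
def ellChoose (c : ℂ) (m : ℕ) : MvPolynomial ι ℂ :=
  (m.factorial : ℂ)⁻¹ • Polynomial.aeval (linearForm D.ell - C c) (descPochhammer ℂ m)

lemma eval_ellChoose (c : ℂ) (m : ℕ) (z : ι → ℂ) :
    eval z (D.ellChoose c m) =
      (∏ j ∈ Finset.range m, (evalC D.ell z - c - (j : ℂ))) / (m.factorial : ℂ) := by
  rw [ellChoose, smul_eval, ← aeval_eq_eval, ← Polynomial.aeval_algHom_apply, aeval_eq_eval,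
    Polynomial.coe_aeval_eq_eval, descPochhammer_eval_eq_prod_range, div_eq_inv_mul]
  simp only [map_sub, eval_linearForm, eval_C]

lemma ellChoose_mem_invariants (c : ℂ) (m : ℕ) : D.ellChoose c m ∈ D.invariants := by
  have hshift : linearForm D.ell - C c ∈ D.invariants :=
    D.invariants.sub_mem D.linearForm_ell_mem_invariants (D.invariants.algebraMap_mem c)
  refine D.invariants.smul_mem ?_ _
  rw [← Polynomial.aeval_subalgebra_coe _ _ ⟨_, hshift⟩]
  exact Subtype.property _

lemma totalDegree_ellChoose_le (c : ℂ) (m : ℕ) : (D.ellChoose c m).totalDegree ≤ m := by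
  have hshift : (linearForm D.ell - C c).totalDegree ≤ 1 :=
    (totalDegree_sub_C_le _ _).trans (totalDegree_linearForm_le _)
  calc (D.ellChoose c m).totalDegree
      ≤ (descPochhammer ℂ m).natDegree * (linearForm D.ell - C c).totalDegree :=
        (totalDegree_smul_le _ _).trans (totalDegree_aeval_le _ _)
    _ ≤ m * 1 := by rw [descPochhammer_natDegree]; exact Nat.mul_le_mul_left m hshift
    _ = m := mul_one m

lemma eval_ellChoose_add_toV (ρ : ι → ℂ) {lam μ : ι → ℤ} {j : ℕ}
    (hj : pairZ D.ell μ = pairZ D.ell lam + j) (m : ℕ) :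
    eval (ρ + toV μ) (D.ellChoose (evalC D.ell (ρ + toV lam)) m) = (j.choose m : ℂ) := by
  have hdiff : evalC D.ell (ρ + toV μ) - evalC D.ell (ρ + toV lam) = j := by
    rw [evalC_add, evalC_add, evalC_toV, evalC_toV, hj]
    push_cast
    ring
  rw [eval_ellChoose, hdiff, ← descPochhammer_eval_eq_prod_range,
    descPochhammer_eval_eq_descFactorial, Nat.descFactorial_eq_factorial_mul_choose, Nat.cast_mul,
    mul_div_cancel_left₀ _ (Nat.cast_ne_zero.2 m.factorial_ne_zero)]

/-- The left-hand side `binom(ℓ(z) - ℓ(ρ+λ), m)·p_λ(z)` of the Pieri formula, for a polynomial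
`p` in the role of `p_λ`. -/
def pieriProduct (ρ : ι → ℂ) (lam : ι → ℤ) (m : ℕ) (p : MvPolynomial ι ℂ) :
    MvPolynomial ι ℂ :=
  D.ellChoose (evalC D.ell (ρ + toV lam)) m * p

/-- The space of `W`-invariant polynomials of total degree at most `d`. -/
def invariantsLE (d : ℕ) : Submodule ℂ (MvPolynomial ι ℂ) :=
  Subalgebra.toSubmodule D.invariants ⊓ restrictTotalDegree ι ℂ d

variable {D}

lemma mem_invariantsLE {d : ℕ} {p : MvPolynomial ι ℂ} :
    p ∈ D.invariantsLE d ↔ D.WInv p ∧ p.totalDegree ≤ d :=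
  and_congr Iff.rfl (mem_restrictTotalDegree _ _ _)

lemma CapelliAt.mem_invariantsLE {ρ : ι → ℂ} {lam : ι → ℤ} {p : MvPolynomial ι ℂ} {d : ℕ}
    (hp : D.CapelliAt ρ lam p) (hd : pairZ D.ell lam ≤ d) : p ∈ D.invariantsLE d :=
  Data.mem_invariantsLE.2 ⟨hp.1, by exact_mod_cast hp.2.1.trans hd⟩

variable (D)

/-- Interpolation data of an invariant polynomial of degree at most `d`: its values at the points
`ρ + μ` with `μ ∈ Λ₊` and `ℓ(μ) ≤ d`. -/
def evalNodes (ρ : ι → ℂ) (d : ℕ) : D.invariantsLE d →ₗ[ℂ] (D.LamPlusLE d → ℂ) :=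
  LinearMap.pi fun μ => (aeval (ρ + toV μ.1)).toLinearMap ∘ₗ (D.invariantsLE d).subtype

lemma evalNodes_apply (ρ : ι → ℂ) (d : ℕ) (p : D.invariantsLE d) (μ : D.LamPlusLE d) :
    D.evalNodes ρ d p μ = eval (ρ + toV μ.1) p.1 := by
  simp [evalNodes, aeval_eq_eval]

-- `C0` is about polynomials of degree exactly `ℓ(λ)`, and one of `p ± q` is such a polynomial.
lemma eq_zero_of_existsUnique {ρ : ι → ℂ} {lam : ι → ℤ} {q : MvPolynomial ι ℂ}
    (h : ∃! p : MvPolynomial ι ℂ, D.WInv p ∧ p.totalDegree = (pairZ D.ell lam).toNat ∧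
      ∀ μ : ι → ℤ, μ ∈ LamPlus → pairZ D.ell μ ≤ pairZ D.ell lam →
        eval (ρ + toV μ) p = if μ = lam then 1 else 0)
    (hq : D.WInv q) (hdeg : q.totalDegree ≤ (pairZ D.ell lam).toNat)
    (hzero : ∀ μ ∈ D.LamPlusLE (pairZ D.ell lam), eval (ρ + toV μ) q = 0) : q = 0 := by
  obtain ⟨p, ⟨hp, hpdeg, hpeval⟩, hunique⟩ := h
  rcases totalDegree_add_eq_or_totalDegree_sub_eq (hdeg.trans hpdeg.ge) with hadd | hsub
  · have := hunique (p + q) ⟨D.invariants.add_mem hp hq, hadd.trans hpdeg, fun μ hμ hle => by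
      rw [map_add, hzero μ ⟨hμ, hle⟩, add_zero, hpeval μ hμ hle]⟩
    simpa using this
  · have := hunique (p - q) ⟨D.invariants.sub_mem hp hq, hsub.trans hpdeg, fun μ hμ hle => by
      rw [map_sub, hzero μ ⟨hμ, hle⟩, sub_zero, hpeval μ hμ hle]⟩
    simpa using this

variable {D}

lemma C0.exists_injective_evalNodes (hC0 : D.C0) (d : ℕ) :
    ∃ ρ, Function.Injective (D.evalNodes ρ d) := by
  obtain ⟨ρ, -, -, -, hexists⟩ := hC0
  refine ⟨ρ, (injective_iff_map_eq_zero _).2 fun ⟨q, hq⟩ hq0 => ?_⟩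
  have hzero : ∀ μ ∈ D.LamPlusLE d, eval (ρ + toV μ) q = 0 := fun μ hμ => by
    simpa only [evalNodes_apply, Pi.zero_apply] using congrFun hq0 ⟨μ, hμ⟩
  obtain ⟨hqW, hqdeg⟩ := mem_invariantsLE.1 hq
  suffices q = 0 from Subtype.ext this
  rcases isEmpty_or_nonempty ι with _ | _
  · have hzero0 := hzero 0 ⟨fun _ => le_rfl, by simp [pairZ]⟩
    rw [eq_C_of_isEmpty q, eval_C] at hzero0
    rw [eq_C_of_isEmpty q, hzero0, C_0]
  · obtain ⟨lam, hlam, hlamd⟩ := D.exists_mem_LamPlus_pairZ_ell_eq d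
    exact D.eq_zero_of_existsUnique (hexists lam hlam) hqW (by rwa [hlamd, Int.toNat_natCast])
      (by rwa [hlamd])

variable {ρ : ι → ℂ} {pl : (ι → ℤ) → MvPolynomial ι ℂ}

lemma surjective_evalNodes (hpl : ∀ lam ∈ LamPlus, D.CapelliAt ρ lam (pl lam)) (d : ℕ) :
    Function.Surjective (D.evalNodes ρ d) := by
  have := (D.finite_LamPlusLE d).to_subtype
  refine surjective_of_unitriangular (fun μ : D.LamPlusLE d => pairZ D.ell μ.1) _
    (fun μ => ⟨pl μ.1, (hpl μ.1 μ.2.1).mem_invariantsLE μ.2.2⟩) fun μ ν hle => ?_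
  simp only [evalNodes_apply, (hpl μ.1 μ.2.1).2.2 ν.1 ν.2.1 hle, Subtype.ext_iff]

lemma injective_evalNodes (hC0 : D.C0) (hpl : ∀ lam ∈ LamPlus, D.CapelliAt ρ lam (pl lam))
    (d : ℕ) : Function.Injective (D.evalNodes ρ d) := by
  have := (D.finite_LamPlusLE d).to_subtype
  obtain ⟨ρ', hinj⟩ := hC0.exists_injective_evalNodes d
  exact OrzechProperty.injective_of_surjective_of_injective _ _ hinj (surjective_evalNodes hpl d)

lemma eq_of_eval_nodes_eq (hC0 : D.C0) (hpl : ∀ lam ∈ LamPlus, D.CapelliAt ρ lam (pl lam))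
    {d : ℕ} {p q : MvPolynomial ι ℂ} (hp : p ∈ D.invariantsLE d) (hq : q ∈ D.invariantsLE d)
    (heq : ∀ μ ∈ D.LamPlusLE d, eval (ρ + toV μ) p = eval (ρ + toV μ) q) : p = q := by
  have : (⟨p, hp⟩ : D.invariantsLE d) = ⟨q, hq⟩ :=
    injective_evalNodes hC0 hpl d <| funext fun μ => by
      simpa only [evalNodes_apply] using heq μ.1 μ.2
  exact congrArg Subtype.val this

lemma eq_finsum_capelli_of_eval_eq_zero (hC0 : D.C0)
    (hpl : ∀ lam ∈ LamPlus, D.CapelliAt ρ lam (pl lam)) {d : ℕ} {q : MvPolynomial ι ℂ}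
    (hq : q ∈ D.invariantsLE d)
    (hzero : ∀ μ ∈ LamPlus, pairZ D.ell μ < d → eval (ρ + toV μ) q = 0) :
    q = ∑ᶠ τ ∈ D.LamPlusEq d, eval (ρ + toV τ) q • pl τ := by
  rw [finsum_mem_eq_finite_toFinset_sum _ (D.finite_LamPlusEq d)]
  have hmem {τ} (hτ : τ ∈ (D.finite_LamPlusEq d).toFinset) : τ ∈ D.LamPlusEq d :=
    (Set.Finite.mem_toFinset _).1 hτ
  refine eq_of_eval_nodes_eq hC0 hpl hq (Submodule.sum_mem _ fun τ hτ => Submodule.smul_mem _ _ <|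
    (hpl τ (hmem hτ).1).mem_invariantsLE (hmem hτ).2.le) fun μ hμ => ?_
  calc eval (ρ + toV μ) q
      = if μ ∈ (D.finite_LamPlusEq d).toFinset then eval (ρ + toV μ) q else 0 := by
        simp only [Set.Finite.mem_toFinset]
        split_ifs with hμd
        · rfl
        · exact hzero μ hμ.1 (hμ.2.lt_of_ne fun h => hμd ⟨hμ.1, h⟩)
    _ = ∑ τ ∈ (D.finite_LamPlusEq d).toFinset,
          if μ = τ then eval (ρ + toV τ) q else 0 :=
        (Finset.sum_ite_eq _ μ fun τ => eval (ρ + toV τ) q).symm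
    _ = eval (ρ + toV μ) (∑ τ ∈ (D.finite_LamPlusEq d).toFinset, eval (ρ + toV τ) q • pl τ) := by
        rw [map_sum]
        refine Finset.sum_congr rfl fun τ hτ => ?_
        have hμτ : pairZ D.ell μ ≤ pairZ D.ell τ := hμ.2.trans (hmem hτ).2.ge
        rw [smul_eval, (hpl τ (hmem hτ).1).2.2 μ hμ.1 hμτ, mul_ite, mul_one, mul_zero]

section Pieri

variable {lam : ι → ℤ} {p : MvPolynomial ι ℂ}

lemma pieriProduct_mem_invariantsLE (hp : D.CapelliAt ρ lam p) {d m : ℕ}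
    (hd : pairZ D.ell lam + m = d) : D.pieriProduct ρ lam m p ∈ D.invariantsLE d := by
  refine mem_invariantsLE.2 ⟨D.invariants.mul_mem (D.ellChoose_mem_invariants _ m) hp.1, ?_⟩
  have hchoose := D.totalDegree_ellChoose_le (evalC D.ell (ρ + toV lam)) m
  have hmul := totalDegree_mul (D.ellChoose (evalC D.ell (ρ + toV lam)) m) p
  have hpdeg := hp.2.1
  rw [pieriProduct]
  lia

lemma eval_pieriProduct_eq_zero (hp : D.CapelliAt ρ lam p) {m : ℕ} {μ : ι → ℤ}
    (hμ : μ ∈ LamPlus) (hlt : pairZ D.ell μ < pairZ D.ell lam + m) :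
    eval (ρ + toV μ) (D.pieriProduct ρ lam m p) = 0 := by
  rw [pieriProduct, map_mul]
  rcases lt_or_ge (pairZ D.ell μ) (pairZ D.ell lam) with hμlam | hμlam
  · rw [hp.2.2 μ hμ hμlam.le, if_neg (by rintro rfl; exact lt_irrefl _ hμlam), mul_zero]
  · obtain ⟨j, hj⟩ := Int.le.dest hμlam
    rw [D.eval_ellChoose_add_toV ρ hj.symm, Nat.choose_eq_zero_of_lt (by lia), Nat.cast_zero,
      zero_mul]

lemma eval_pieriProduct_of_pairZ_ell_eq {m : ℕ} {τ : ι → ℤ}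
    (hτ : pairZ D.ell τ = pairZ D.ell lam + m) :
    eval (ρ + toV τ) (D.pieriProduct ρ lam m p) = eval (ρ + toV τ) p := by
  rw [pieriProduct, map_mul, D.eval_ellChoose_add_toV ρ hτ, Nat.choose_self, Nat.cast_one, one_mul]

end Pieri

end Data

theorem statement9_general (D : Data ι) (hC0 : D.C0)
    (ρ : ι → ℂ) (pl : (ι → ℤ) → MvPolynomial ι ℂ)
    (hpl : ∀ lam : ι → ℤ, lam ∈ LamPlus → D.CapelliAt ρ lam (pl lam))
    (lam : ι → ℤ) (hlam : lam ∈ LamPlus) (m : ℕ) :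
    ∀ z : ι → ℂ,
      ((∏ j ∈ Finset.range m, (evalC D.ell z - evalC D.ell (ρ + toV lam) - (j : ℂ))) /
          (Nat.factorial m : ℂ)) * eval z (pl lam) =
        ∑ᶠ τ ∈ {τ : ι → ℤ | τ ∈ LamPlus ∧ pairZ D.ell (τ - lam) = (m : ℤ)},
          eval (ρ + toV τ) (pl lam) * eval z (pl τ) := by
  intro z
  obtain ⟨n, hn⟩ := Int.eq_ofNat_of_zero_le (D.pairZ_ell_nonneg hlam)
  have hd : pairZ D.ell lam + m = (n + m : ℕ) := by rw [hn]; rfl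
  have hset : {τ | τ ∈ LamPlus ∧ pairZ D.ell (τ - lam) = (m : ℤ)} = D.LamPlusEq (n + m : ℕ) := by
    ext τ
    simp only [Data.LamPlusEq, Set.mem_ofPred_eq, pairZ_sub, ← hd, sub_eq_iff_eq_add']
  have hexpand := Data.eq_finsum_capelli_of_eval_eq_zero hC0 hpl
    (Data.pieriProduct_mem_invariantsLE (hpl lam hlam) hd)
    fun μ hμ hlt => Data.eval_pieriProduct_eq_zero (hpl lam hlam) hμ (hd ▸ hlt)
  rw [← D.eval_ellChoose, ← map_mul, ← Data.pieriProduct, hexpand, hset]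
  refine ((eval z).toAddMonoidHom.map_finsum_mem _ (D.finite_LamPlusEq _)).trans
    (finsum_mem_congr rfl fun τ hτ => ?_)
  exact (smul_eval _ _ _).trans
    (by rw [Data.eval_pieriProduct_of_pairZ_ell_eq (hτ.2.trans hd.symm)])

/-- formula (ellPieri2): assuming axiom C0, for regular dominant
`ρ ∈ V₀`, `λ ∈ Λ₊` and `k ∈ ℕ`, one has the polynomial identity
`binom(ℓ(z) - ℓ(ρ+λ), k)·p_λ(z) = Σ_{τ ∈ Λ₊, ℓ(τ-λ)=k} p_λ(ρ+τ)·p_τ(z)`. -/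
theorem statement9 (D : Data ι) (hC0 : D.C0)
    (ρ : ι → ℂ) (hρ : D.InV0 ρ) (hreg : D.Regular ρ) (hdom : D.Dominant ρ)
    (pl : (ι → ℤ) → MvPolynomial ι ℂ)
    (hpl : ∀ lam : ι → ℤ, lam ∈ LamPlus → D.CapelliAt ρ lam (pl lam))
    (lam : ι → ℤ) (hlam : lam ∈ LamPlus) (m : ℕ) :
    ∀ z : ι → ℂ,
      ((∏ j ∈ Finset.range m, (evalC D.ell z - evalC D.ell (ρ + toV lam) - (j : ℂ))) /
          (Nat.factorial m : ℂ)) * eval z (pl lam) =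
        ∑ᶠ τ ∈ {τ : ι → ℤ | τ ∈ LamPlus ∧ pairZ D.ell (τ - lam) = (m : ℤ)},
          eval (ρ + toV τ) (pl lam) * eval z (pl τ) := by
  exact statement9_general D hC0 ρ pl hpl lam hlam m

end Knop

end
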